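/- If a subsequence (x^{(t_m)}) of the IRLS iterates converges to a point x* ∈ ℝ^d, then x* is a stationary point of Φ, i.e. ∇Φ(x*) = 0. -/

import Mathlib

open scoped ContDiff RealInnerProductSpace
open Filter

/-!
Write `Φ x = ∑ j, ρ j (‖x - a j‖ ^ 2)` with concave losses `ρ j`. Replacing each `ρ j` by its
tangent at the current point gives a quadratic majorant of `Φ` which the next iterate, a weighted
barycentre, minimizes; completing the square shows that a step from `x` to `y` lowers `Φ` by at
least `(∑ j, μ j (‖x - a j‖ ^ 2)) * ‖x - y‖ ^ 2`, where `μ j` is the derivative of `ρ j`. At a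
cluster point of the iterates a step leaves the continuous Lyapunov function `Φ` unchanged, so the
cluster point is fixed, and the fixed-point equation says that the gradient vanishes. For a negative
power `q` the same argument applies to `s ^ q / q`, so the iteration then ascends
`∑ j, w j * (‖x - a j‖ ^ 2 + ε) ^ q`.
-/

section ClusterPoints

theorem tendsto_atTop_of_antitone_of_mapClusterPt {β α : Type*} [Preorder β] [LinearOrder α]
    [TopologicalSpace α] [OrderTopology α] {g : β → α} (hg : Antitone g) {b : α}
    (hb : MapClusterPt b atTop g) : Tendsto g atTop (nhds b) := by
  have le_g (t : β) : b ≤ g t := by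
    by_contra! hlt
    obtain ⟨s, hs, hts⟩ := ((hb.frequently (lt_mem_nhds hlt)).and_eventually
      (eventually_ge_atTop t)).exists
    exact hs.not_ge (hg hts)
  refine tendsto_order.2 ⟨fun c hc => .of_forall fun t => hc.trans_le (le_g t), fun c hc => ?_⟩
  obtain ⟨s, hs⟩ := (hb.frequently (gt_mem_nhds hc)).exists
  filter_upwards [eventually_ge_atTop s] with t ht using (hg ht).trans_lt hs

/-- LaSalle's invariance principle in discrete time. -/
theorem lyapunov_apply_eq_of_mapClusterPt {X α : Type*} [TopologicalSpace X] [LinearOrder α]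
    [TopologicalSpace α] [OrderTopology α] {T : X → X} {V : X → α} (hle : ∀ z, V (T z) ≤ V z)
    {x : ℕ → X} (hx : ∀ t, x (t + 1) = T (x t)) {y : X} (hy : MapClusterPt y atTop x)
    (hT : ContinuousAt T y) (hVy : ContinuousAt V y) (hVTy : ContinuousAt V (T y)) :
    V (T y) = V y := by
  have anti : Antitone (V ∘ x) := antitone_nat_of_succ_le fun t => by
    simpa only [Function.comp_apply, hx] using hle (x t)
  have lim : Tendsto (V ∘ x) atTop (nhds (V y)) :=
    tendsto_atTop_of_antitone_of_mapClusterPt anti (hy.continuousAt_comp hVy)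
  have lim_succ : Tendsto (V ∘ T ∘ x) atTop (nhds (V y)) :=
    (lim.comp (tendsto_add_atTop_nat 1)).congr fun t => congrArg V (hx t)
  have cluster_succ : MapClusterPt (V (T y)) atTop (V ∘ T ∘ x) :=
    (hy.continuousAt_comp hT).continuousAt_comp hVTy
  have : (nhds (V (T y)) ⊓ nhds (V y)).NeBot := ClusterPt.mono cluster_succ lim_succ
  exact eq_of_nhds_neBot this

end ClusterPoints

theorem le_add_mul_sub_of_antitoneOn_deriv {D : Set ℝ} [D.OrdConnected] {f f' : ℝ → ℝ}
    (hf : ∀ s ∈ D, HasDerivWithinAt f (f' s) D s) (hf' : AntitoneOn f' D) {u v : ℝ} (hu : u ∈ D)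
    (hv : v ∈ D) : f v ≤ f u + f' u * (v - u) := by
  have mean_value {b c : ℝ} (hb : b ∈ D) (hc : c ∈ D) (hbc : b < c) :
      ∃ s ∈ D, s ∈ Set.Ioo b c ∧ f c - f b = f' s * (c - b) := by
    have hD : Set.Icc b c ⊆ D := Set.OrdConnected.out ‹_› hb hc
    obtain ⟨s, hs, hslope⟩ := exists_hasDerivAt_eq_slope f f' hbc
      (fun r hr => (hf r (hD hr)).continuousWithinAt.mono hD)
      fun r hr => (hf r (hD ⟨hr.1.le, hr.2.le⟩)).hasDerivAt
        (mem_of_superset (Icc_mem_nhds hr.1 hr.2) hD)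
    exact ⟨s, hD ⟨hs.1.le, hs.2.le⟩, hs, by rw [hslope, div_mul_cancel₀ _ (sub_ne_zero.2 hbc.ne')]⟩
  rcases lt_trichotomy u v with huv | rfl | hvu
  · obtain ⟨s, hs, hus, heq⟩ := mean_value hu hv huv
    linarith [mul_le_mul_of_nonneg_right (hf' hu hs hus.1.le) (sub_nonneg.2 huv.le)]
  · simp
  · obtain ⟨s, hs, hsu, heq⟩ := mean_value hv hu hvu
    linarith [mul_le_mul_of_nonneg_right (hf' hs hu hsu.2.le) (sub_nonneg.2 hvu.le)]

section Barycentre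

variable {E ι : Type*} [NormedAddCommGroup E] {t : Finset ι} {m : ι → ℝ}

theorem sum_smul_centerMass_of_nonneg [NormedSpace ℝ E] (hm : ∀ j ∈ t, 0 ≤ m j) (a : ι → E) :
    (∑ j ∈ t, m j) • t.centerMass m a = ∑ j ∈ t, m j • a j := by
  rcases eq_or_ne (∑ j ∈ t, m j) 0 with hzero | hne
  · have vanish := (Finset.sum_eq_zero_iff_of_nonneg hm).1 hzero
    rw [hzero, zero_smul, Finset.sum_eq_zero fun j hj => by rw [vanish j hj, zero_smul]]
  · exact smul_inv_smul₀ hne _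

theorem sum_mul_norm_sub_sq_eq_add_of_barycentre [InnerProductSpace ℝ E] {a : ι → E} {c : E}
    (hc : (∑ j ∈ t, m j) • c = ∑ j ∈ t, m j • a j) (x : E) :
    ∑ j ∈ t, m j * ‖x - a j‖ ^ 2 =
      ∑ j ∈ t, m j * ‖c - a j‖ ^ 2 + (∑ j ∈ t, m j) * ‖x - c‖ ^ 2 := by
  have centred : ∑ j ∈ t, m j • (c - a j) = 0 := by
    simp only [smul_sub, Finset.sum_sub_distrib, ← Finset.sum_smul, hc, sub_self]
  have cross : ∑ j ∈ t, m j * ⟪x - c, c - a j⟫ = 0 := by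
    simp only [← real_inner_smul_right, ← inner_sum, centred, inner_zero_right]
  have expand (j : ι) : m j * ‖x - a j‖ ^ 2 =
      m j * ‖c - a j‖ ^ 2 + m j * ‖x - c‖ ^ 2 + 2 * (m j * ⟪x - c, c - a j⟫) := by
    rw [← sub_add_sub_cancel x c (a j), norm_add_sq_real]
    ring
  simp only [expand, Finset.sum_add_distrib, ← Finset.mul_sum, cross, ← Finset.sum_mul, mul_zero,
    add_zero]

end Barycentre

/-- The losses for which iteratively reweighted least squares is a descent method: `ρ`, a function
of the squared residual, is nondecreasing, concave and continuously differentiable on `[0, ∞)`,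
with derivative `μ`. The weights `μ` are kept as a parameter so that they can be given by a
formula. -/
structure IsIRLSLoss (ρ μ : ℝ → ℝ) : Prop where
  hasDerivWithinAt : ∀ s ∈ Set.Ici 0, HasDerivWithinAt ρ (μ s) (Set.Ici 0) s
  nonneg : ∀ s, 0 ≤ s → 0 ≤ μ s
  antitoneOn : AntitoneOn μ (Set.Ici 0)
  continuousOn : ContinuousOn μ (Set.Ici 0)

theorem isIRLSLoss_rpow {w ε q : ℝ} (hw : 0 ≤ w) (hε : 0 < ε) (hq : q ≠ 0) (hq1 : q ≤ 1) :
    IsIRLSLoss (fun s => q⁻¹ * (w * (s + ε) ^ q)) (fun s => w * (s + ε) ^ (q - 1)) := by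
  have shift_pos (s : ℝ) (hs : s ∈ Set.Ici 0) : 0 < s + ε := add_pos_of_nonneg_of_pos hs hε
  refine ⟨fun s hs => ?_, fun s hs => ?_, fun s hs r _ hsr => ?_, ?_⟩
  · have shift := (hasDerivAt_id s).add_const ε
    have power := shift.rpow_const (p := q) (Or.inl (shift_pos s hs).ne')
    refine ((power.const_mul w).const_mul q⁻¹).hasDerivWithinAt.congr_deriv ?_
    simp only [id]
    field_simp
  · exact mul_nonneg hw (Real.rpow_nonneg (shift_pos s hs).le _)
  · exact mul_le_mul_of_nonneg_left (Real.rpow_le_rpow_of_nonpos (shift_pos s hs)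
      (add_le_add_left hsr ε) (sub_nonpos.2 hq1)) hw
  · exact continuousOn_const.mul ((continuousOn_id.add continuousOn_const).rpow_const
      fun s hs => Or.inl (shift_pos s hs).ne')

section IRLS

variable {E ι : Type*} [NormedAddCommGroup E] [Fintype ι]

/-- The objective of a robust fit of one point to the data `a`, with `ρ j` the loss in the squared
distance to `a j`. -/
def irlsObjective (ρ : ι → ℝ → ℝ) (a : ι → E) (x : E) : ℝ :=
  ∑ j, ρ j (‖x - a j‖ ^ 2)

/-- One step of iteratively reweighted least squares: the barycentre of the data `a` with the
weights `μ j` evaluated at the current squared distances. It is `0` if all these weights vanish. -/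
noncomputable def irlsStep [NormedSpace ℝ E] (μ : ι → ℝ → ℝ) (a : ι → E) (x : E) : E :=
  Finset.univ.centerMass (fun j => μ j (‖x - a j‖ ^ 2)) a

variable {ρ μ : ι → ℝ → ℝ}

theorem continuousAt_irlsStep [NormedSpace ℝ E] (hμ : ∀ j, ContinuousOn (μ j) (Set.Ici 0))
    {a : ι → E} {x : E} (hx : ∑ j, μ j (‖x - a j‖ ^ 2) ≠ 0) : ContinuousAt (irlsStep μ a) x := by
  have weight (j : ι) : Continuous fun z => μ j (‖z - a j‖ ^ 2) :=
    (hμ j).comp_continuous (by fun_prop) fun z => sq_nonneg ‖z - a j‖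
  have total := continuous_finsetSum Finset.univ fun j _ => weight j
  have moment := continuous_finsetSum Finset.univ fun j _ =>
    (weight j).smul (continuous_const (y := a j))
  exact (total.continuousAt.inv₀ hx).smul moment.continuousAt

theorem sum_smul_irlsStep [NormedSpace ℝ E] (hμ : ∀ j s, 0 ≤ s → 0 ≤ μ j s) (a : ι → E) (x : E) :
    (∑ j, μ j (‖x - a j‖ ^ 2)) • irlsStep μ a x = ∑ j, μ j (‖x - a j‖ ^ 2) • a j :=
  sum_smul_centerMass_of_nonneg (fun j _ => hμ j _ (sq_nonneg _)) a

variable [InnerProductSpace ℝ E]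

theorem hasFDerivAt_irlsObjective
    (hρ : ∀ j, ∀ s ∈ Set.Ici 0, HasDerivWithinAt (ρ j) (μ j s) (Set.Ici 0) s) (a : ι → E) (x : E) :
    HasFDerivAt (irlsObjective ρ a) (2 • innerSL ℝ (∑ j, μ j (‖x - a j‖ ^ 2) • (x - a j))) x := by
  have term (j : ι) : HasFDerivAt (fun z => ρ j (‖z - a j‖ ^ 2))
      (μ j (‖x - a j‖ ^ 2) • 2 • innerSL ℝ (x - a j)) x :=
    (hρ j _ (sq_nonneg ‖x - a j‖)).comp_hasFDerivAt x ((hasFDerivAt_id x).sub_const (a j)).norm_sq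
      (.of_forall fun z => sq_nonneg ‖z - a j‖)
  refine (HasFDerivAt.fun_sum (u := Finset.univ) fun j _ => term j).congr_fderiv ?_
  simp only [map_sum, map_smul, Finset.smul_sum, smul_comm (2 : ℕ)]

theorem irlsObjective_irlsStep_le (hρ : ∀ j, IsIRLSLoss (ρ j) (μ j)) (a : ι → E) (x : E) :
    irlsObjective ρ a (irlsStep μ a x) ≤
      irlsObjective ρ a x - (∑ j, μ j (‖x - a j‖ ^ 2)) * ‖x - irlsStep μ a x‖ ^ 2 := by
  set c := irlsStep μ a x
  calc irlsObjective ρ a c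
      ≤ ∑ j, (ρ j (‖x - a j‖ ^ 2) +
          μ j (‖x - a j‖ ^ 2) * (‖c - a j‖ ^ 2 - ‖x - a j‖ ^ 2)) :=
        Finset.sum_le_sum fun j _ => le_add_mul_sub_of_antitoneOn_deriv (hρ j).hasDerivWithinAt
          (hρ j).antitoneOn (sq_nonneg ‖x - a j‖) (sq_nonneg ‖c - a j‖)
    _ = irlsObjective ρ a x - (∑ j, μ j (‖x - a j‖ ^ 2)) * ‖x - c‖ ^ 2 := by
        simp only [mul_sub, Finset.sum_add_distrib, Finset.sum_sub_distrib, irlsObjective,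
          sum_mul_norm_sub_sq_eq_add_of_barycentre
            (sum_smul_irlsStep (fun j => (hρ j).nonneg) a x) x]
        ring

theorem irlsStep_eq_self_of_mapClusterPt (hρ : ∀ j, IsIRLSLoss (ρ j) (μ j)) (a : ι → E)
    {x : ℕ → E} (hx : ∀ t, x (t + 1) = irlsStep μ a (x t)) {y : E}
    (hy : MapClusterPt y atTop x) (hpos : 0 < ∑ j, μ j (‖y - a j‖ ^ 2)) :
    irlsStep μ a y = y := by
  have descent (z : E) : irlsObjective ρ a (irlsStep μ a z) ≤ irlsObjective ρ a z :=
    (irlsObjective_irlsStep_le hρ a z).trans <| sub_le_self _ <|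
      mul_nonneg (Finset.sum_nonneg fun j _ => (hρ j).nonneg _ (sq_nonneg _)) (sq_nonneg _)
  have obj_continuousAt (z : E) : ContinuousAt (irlsObjective ρ a) z :=
    (hasFDerivAt_irlsObjective (fun j => (hρ j).hasDerivWithinAt) a z).continuousAt
  have stationary : irlsObjective ρ a (irlsStep μ a y) = irlsObjective ρ a y :=
    lyapunov_apply_eq_of_mapClusterPt descent hx hy
      (continuousAt_irlsStep (fun j => (hρ j).continuousOn) hpos.ne')
      (obj_continuousAt _) (obj_continuousAt _)
  have no_move : (∑ j, μ j (‖y - a j‖ ^ 2)) * ‖y - irlsStep μ a y‖ ^ 2 ≤ 0 := by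
    linarith [irlsObjective_irlsStep_le hρ a y]
  have dist_zero : ‖y - irlsStep μ a y‖ ^ 2 = 0 :=
    (nonpos_of_mul_nonpos_right no_move hpos).antisymm (sq_nonneg _)
  exact (sub_eq_zero.1 (norm_eq_zero.1 (pow_eq_zero_iff two_ne_zero |>.1 dist_zero))).symm

theorem hasFDerivAt_irlsObjective_zero_of_mapClusterPt (hρ : ∀ j, IsIRLSLoss (ρ j) (μ j))
    (a : ι → E) {x : ℕ → E} (hx : ∀ t, x (t + 1) = irlsStep μ a (x t)) {y : E}
    (hy : MapClusterPt y atTop x) :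
    HasFDerivAt (irlsObjective ρ a) (0 : E →L[ℝ] ℝ) y := by
  have weight_nonneg : ∀ j ∈ Finset.univ, 0 ≤ μ j (‖y - a j‖ ^ 2) := fun j _ =>
    (hρ j).nonneg _ (sq_nonneg _)
  have critical : ∑ j, μ j (‖y - a j‖ ^ 2) • (y - a j) = 0 := by
    rcases (Finset.sum_nonneg weight_nonneg).eq_or_lt with hzero | hpos
    · have vanish := (Finset.sum_eq_zero_iff_of_nonneg weight_nonneg).1 hzero.symm
      exact Finset.sum_eq_zero fun j hj => by rw [vanish j hj, zero_smul]
    · have fixed := sum_smul_irlsStep (fun j => (hρ j).nonneg) a y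
      rw [irlsStep_eq_self_of_mapClusterPt hρ a hx hy hpos] at fixed
      simp only [smul_sub, Finset.sum_sub_distrib, ← Finset.sum_smul, fixed, sub_self]
  simpa only [critical, map_zero, smul_zero] using
    hasFDerivAt_irlsObjective (fun j => (hρ j).hasDerivWithinAt) a y

end IRLS

theorem stmt_15_general {E ι : Type*} [NormedAddCommGroup E] [InnerProductSpace ℝ E] [Fintype ι]
    (a : ι → E) {w : ι → ℝ} (hw : ∀ j, 0 ≤ w j) {ε : ℝ} (hε : 0 < ε) {p : ℝ} (hp : p ≤ 2)
    {x : ℕ → E}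
    (hx : ∀ t, x (t + 1) =
      (∑ j, w j * (‖x t - a j‖ ^ 2 + ε) ^ (p / 2 - 1))⁻¹ •
        ∑ j, (w j * (‖x t - a j‖ ^ 2 + ε) ^ (p / 2 - 1)) • a j)
    {y : E} (hy : MapClusterPt y atTop x) :
    HasFDerivAt (fun z => ∑ j, w j * (‖z - a j‖ ^ 2 + ε) ^ (p / 2)) (0 : E →L[ℝ] ℝ) y := by
  rcases eq_or_ne (p / 2) 0 with hq | hq
  · simpa only [hq, Real.rpow_zero] using hasFDerivAt_const (∑ j, w j * 1) y
  · have critical := hasFDerivAt_irlsObjective_zero_of_mapClusterPt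
      (fun j => isIRLSLoss_rpow (hw j) hε hq (by linarith)) a hx hy
    simpa only [irlsObjective, ← Finset.mul_sum, mul_inv_cancel_left₀ hq, smul_zero] using
      critical.const_mul (p / 2)

theorem stmt_15
    (d n : ℕ) (hd : 1 ≤ d) (hn : 1 ≤ n)
    (a : Fin n → EuclideanSpace ℝ (Fin d))
    (w : Fin n → ℝ) (hw : ∀ j, 0 < w j)
    (ε : ℝ) (hε : 0 < ε)
    (p : ℝ) (hp0 : 0 < p) (hp2 : p ≤ 2)
    (Φ : EuclideanSpace ℝ (Fin d) → ℝ)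
    (hΦ : ∀ x, Φ x = ∑ j, w j * (‖x - a j‖ ^ 2 + ε) ^ (p / 2))
    (x : ℕ → EuclideanSpace ℝ (Fin d))
    (hx : ∀ t, x (t + 1) =
      (∑ j, w j * (‖x t - a j‖ ^ 2 + ε) ^ (p / 2 - 1))⁻¹ •
        ∑ j, (w j * (‖x t - a j‖ ^ 2 + ε) ^ (p / 2 - 1)) • a j)
    (tm : ℕ → ℕ) (htm : StrictMono tm)
    (xstar : EuclideanSpace ℝ (Fin d))
    (hconv : Tendsto (fun m => x (tm m)) atTop (nhds xstar)) :
    gradient Φ xstar = 0 := by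
  obtain rfl : Φ = fun z => ∑ j, w j * (‖z - a j‖ ^ 2 + ε) ^ (p / 2) := funext hΦ
  have hcluster : MapClusterPt xstar atTop x := hconv.mapClusterPt.of_comp htm.tendsto_atTop
  have critical := stmt_15_general a (fun j => (hw j).le) hε hp2 hx hcluster
  simpa only [map_zero] using critical.hasGradientAt.gradient
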